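/- Let G ~ N(0, σ²I_d) be a Gaussian vector in ℝ^d and f : ℝ^d → ℝ measurable. Suppose there is a measurable set A ⊂ ℝ^d with P(G ∈ A) ≥ 1 - ε such that the restriction of f to A is L-Lipschitz, and let M := E[f(G)⁴] < ∞. Then Var(f(G)) ≤ 2σ²L² + 10√(Mε). -/

import Mathlib

open MeasureTheory ProbabilityTheory
open Filter Topology
open scoped NNReal

/-- Finite products of measures preserve absolute continuity. -/
lemma MeasureTheory.Measure.AbsolutelyContinuous.pi_fin {d : ℕ} {α : Fin d → Type*}
    [∀ i, MeasurableSpace (α i)] {μ ν : ∀ i, Measure (α i)} [∀ i, SigmaFinite (μ i)]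
    [∀ i, SigmaFinite (ν i)] (h : ∀ i, μ i ≪ ν i) : Measure.pi μ ≪ Measure.pi ν := by
  induction d with
  | zero => rw [Measure.pi_of_empty μ, Measure.pi_of_empty ν]
  | succ d ih =>
    rw [← (measurePreserving_piFinSuccAbove μ 0).symm.map_eq,
      ← (measurePreserving_piFinSuccAbove ν 0).symm.map_eq]
    exact ((h 0).prod (ih fun j => h _)).map (MeasurableEquiv.measurable _)

section PiGaussian

variable {ι : Type*} [Fintype ι] (v : ℝ≥0)

/-- A product of real Gaussian measures is Gaussian. -/
lemma isGaussian_pi_gaussianReal :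
    IsGaussian (Measure.pi fun _ : ι => gaussianReal 0 v) := by
  have h : HasGaussianLaw (fun ω : ι → ℝ => (fun i => ω i))
      (Measure.pi fun _ : ι => gaussianReal 0 v) := by
    refine iIndepFun.hasGaussianLaw (X := fun i (ω : ι → ℝ) => ω i) (fun i => ?_)
      (iIndepFun_pi (X := fun _ => id) fun _ => aemeasurable_id)
    exact (measurePreserving_eval (fun _ : ι => gaussianReal 0 v) i).hasLaw.hasGaussianLaw
  simpa using h.isGaussian_map

lemma integral_id_pi_gaussianReal :
    (Measure.pi fun _ : ι => gaussianReal 0 v)[id] = 0 := by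
  have := isGaussian_pi_gaussianReal (ι := ι) v
  ext i
  rw [eval_integral]
  · simp [integral_eval]
  · intro i
    exact integrable_eval IsGaussian.integrable_id

lemma variance_dual_pi_gaussianReal [DecidableEq ι] (D : StrongDual ℝ (ι → ℝ)) :
    Var[D; Measure.pi fun _ : ι => gaussianReal 0 v] = v * ∑ i, D (Pi.single i 1) ^ 2 := by
  have hD : (D : (ι → ℝ) → ℝ) = ∑ i, fun x : ι → ℝ => D (Pi.single i 1) * x i := by
    ext x
    conv_lhs => rw [← Finset.univ_sum_single x, map_sum]
    simp only [Finset.sum_apply]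
    refine Finset.sum_congr rfl fun i _ => ?_
    rw [← mul_one (x i), ← smul_eq_mul, Pi.single_smul, map_smul]
    simp [mul_comm]
  conv_lhs => rw [hD]
  rw [variance_sum_pi (X := fun i y => D (Pi.single i 1) * y)]
  · change ∑ i, Var[fun x ↦ _ * (id x); gaussianReal 0 v] = _
    simp_rw [variance_const_mul, variance_id_gaussianReal]
    rw [← Finset.sum_mul, mul_comm]
  · exact fun i ↦ IsGaussian.memLp_two_id.const_mul _

end PiGaussian

section Poincare

variable {E : Type*} [NormedAddCommGroup E] [NormedSpace ℝ E]

/-- Along the path `θ ↦ cos θ • x + sin θ • y`, a Lipschitz function grows at most linearly. -/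
lemma LipschitzWith.abs_cos_smul_add_sin_smul_sub_le {K : ℝ≥0} {h : E → ℝ}
    (hh : LipschitzWith K h) (θ : ℝ) (x y : E) :
    |h (Real.cos θ • x + Real.sin θ • y) - h x| ≤ |θ| * (K * (‖x‖ + ‖y‖)) := by
  have hcos : ‖Real.cos θ - 1‖ ≤ |θ| := by
    simpa using Real.abs_cos_sub_cos_le θ 0
  have hsin : ‖Real.sin θ‖ ≤ |θ| := Real.abs_sin_le_abs
  calc |h (Real.cos θ • x + Real.sin θ • y) - h x|
      ≤ K * ‖Real.cos θ • x + Real.sin θ • y - x‖ := hh.norm_sub_le _ _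
    _ = K * ‖(Real.cos θ - 1) • x + Real.sin θ • y‖ := by
        congr 2; rw [sub_smul, one_smul]; abel
    _ ≤ K * (|θ| * ‖x‖ + |θ| * ‖y‖) := by
        gcongr
        refine (norm_add_le _ _).trans ?_
        rw [norm_smul, norm_smul]
        gcongr
    _ = |θ| * (K * (‖x‖ + ‖y‖)) := by ring

lemma hasDerivAt_cos_smul_add_sin_smul (x y : E) :
    HasDerivAt (fun θ : ℝ => Real.cos θ • x + Real.sin θ • y) y 0 := by
  simpa using ((Real.hasDerivAt_cos 0).smul_const x).fun_add ((Real.hasDerivAt_sin 0).smul_const y)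

variable [MeasurableSpace E] [BorelSpace E] [SecondCountableTopology E] [CompleteSpace E]

lemma LipschitzWith.memLp_two_of_isGaussian {μ : Measure E} [IsGaussian μ] {K : ℝ≥0} {h : E → ℝ}
    (hh : LipschitzWith K h) : MemLp h 2 μ := by
  have hb : MemLp (fun x : E => |h 0| + K * ‖x‖) 2 μ :=
    (memLp_const |h 0|).add ((IsGaussian.memLp_two_id (μ := μ)).norm.const_mul (K : ℝ))
  refine hb.of_le hh.continuous.aestronglyMeasurable (.of_forall fun x => ?_)
  have h1 := hh.norm_sub_le x 0
  rw [sub_zero, Real.norm_eq_abs] at h1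
  rw [Real.norm_eq_abs, Real.norm_eq_abs, abs_of_nonneg (a := |h 0| + _) (by positivity)]
  linarith [abs_sub_abs_le_abs_sub (h x) (h 0)]

/-- The variance is half the squared increment of `h` over a quarter turn, which is at most `n²` times the squared
increment over one step of length `π / (2n)`. -/
lemma two_mul_variance_le_sq_mul_integral {μ : Measure E} [IsGaussian μ] (hμ : μ[id] = 0)
    {h : E → ℝ} (hc : Continuous h) (hh : MemLp h 2 μ) {n : ℕ} {δ : ℝ}
    (hδ : n * δ = Real.pi / 2) :
    2 * Var[h; μ] ≤
      n ^ 2 * ∫ p, (h (Real.cos δ • p.1 + Real.sin δ • p.2) - h p.1) ^ 2 ∂(μ.prod μ) := by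
  set P := μ.prod μ
  let u : ℝ → E × E → ℝ := fun θ p => h (Real.cos θ • p.1 + Real.sin θ • p.2)
  have hrot (θ : ℝ) : MeasurePreserving (ContinuousLinearMap.rotation θ) P P :=
    ⟨by fun_prop, IsGaussian.map_rotation_eq_self hμ θ⟩
  have hu_rot (δ θ : ℝ) (p : E × E) :
      u δ (ContinuousLinearMap.rotation θ p) = u (θ + δ) p := by
    simp only [u, ContinuousLinearMap.rotation_apply, Real.cos_add, Real.sin_add]
    congr 1
    module
  have hu0 : u 0 = fun p => h p.1 := by ext p; simp [u]
  have hu (θ : ℝ) : MemLp (u θ) 2 P := by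
    have h0 : MemLp (u 0) 2 P := by
      rw [hu0]
      exact hh.comp_fst μ
    have := h0.comp_measurePreserving (hrot θ)
    convert this using 1
    ext p
    simp [hu_rot]
  have hstep (θ : ℝ) : ∫ p, (u (θ + δ) p - u θ p) ^ 2 ∂P = ∫ p, (u δ p - u 0 p) ^ 2 ∂P := by
    have hm : AEStronglyMeasurable (fun p => (u δ p - u 0 p) ^ 2)
        (P.map (ContinuousLinearMap.rotation θ)) := by
      refine Continuous.aestronglyMeasurable ?_
      fun_prop
    have := integral_map (hrot θ).measurable.aemeasurable hm
    rw [(hrot θ).map_eq] at this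
    rw [this]
    simp [hu_rot]
  have hint (θ η : ℝ) : Integrable (fun p => (u θ p - u η p) ^ 2) P :=
    ((hu θ).sub (hu η)).integrable_sq
  have htele (p : E × E) : (u (Real.pi / 2) p - u 0 p) ^ 2 ≤
      n * ∑ k ∈ Finset.range n, (u (k * δ + δ) p - u (k * δ) p) ^ 2 := by
    have hsum := Finset.sum_range_sub (fun k : ℕ => u (k * δ) p) n
    rw [hδ, Nat.cast_zero, zero_mul] at hsum
    rw [← hsum]
    refine (sq_sum_le_card_mul_sum_sq).trans_eq ?_
    simp [add_mul]
  have hvar : ∫ p, (u (Real.pi / 2) p - u 0 p) ^ 2 ∂P = 2 * Var[h; μ] := by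
    have hsq : Integrable (fun x => h x ^ 2) μ := hh.integrable_sq
    have hmul : Integrable (fun p : E × E => h p.1 * h p.2) P :=
      (hh.integrable one_le_two).mul_prod (hh.integrable one_le_two)
    have hexp (p : E × E) : (u (Real.pi / 2) p - u 0 p) ^ 2 =
        (h p.2 ^ 2 + h p.1 ^ 2) - 2 * (h p.1 * h p.2) := by
      simp only [u, Real.cos_pi_div_two, Real.sin_pi_div_two, Real.cos_zero, Real.sin_zero,
        zero_smul, one_smul, zero_add, add_zero]
      ring
    simp_rw [hexp]
    rw [integral_sub (f := fun p : E × E => h p.2 ^ 2 + h p.1 ^ 2)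
        ((hsq.comp_snd μ).add (hsq.comp_fst μ)) (hmul.const_mul 2),
      integral_add (hsq.comp_snd μ) (hsq.comp_fst μ), integral_const_mul, integral_prod_mul,
      integral_fun_fst (fun x => h x ^ 2), integral_fun_snd (fun x => h x ^ 2),
      variance_eq_sub hh]
    simp
    ring
  calc 2 * Var[h; μ] = ∫ p, (u (Real.pi / 2) p - u 0 p) ^ 2 ∂P := hvar.symm
    _ ≤ ∫ p, n * ∑ k ∈ Finset.range n, (u (k * δ + δ) p - u (k * δ) p) ^ 2 ∂P :=
        integral_mono (hint _ _)
          ((integrable_finsetSum _ fun k _ => hint _ _).const_mul _) htele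
    _ = n ^ 2 * ∫ p, (u δ p - u 0 p) ^ 2 ∂P := by
        rw [integral_const_mul, integral_finsetSum _ fun k _ => hint _ _]
        simp [hstep]
        ring
    _ = _ := by simp [u]

/-- A **Gaussian Poincaré inequality** for Lipschitz functions, with constant `π² / 8`. -/
theorem LipschitzWith.variance_le_of_isGaussian {μ : Measure E} [IsGaussian μ] (hμ : μ[id] = 0)
    {K : ℝ≥0} {h : E → ℝ} (hh : LipschitzWith K h) (hd : ∀ᵐ x ∂μ, DifferentiableAt ℝ h x)
    {C : ℝ} (hC : ∀ᵐ x ∂μ, Var[fderiv ℝ h x; μ] ≤ C) :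
    Var[h; μ] ≤ Real.pi ^ 2 / 8 * C := by
  let δ : ℕ → ℝ := fun n => Real.pi / 2 / (n + 1)
  have hδ_pos (n : ℕ) : 0 < δ n := by positivity
  have hδ_lim : Tendsto δ atTop (𝓝[≠] 0) := by
    refine tendsto_nhdsWithin_iff.2 ⟨?_, .of_forall fun n => (hδ_pos n).ne'⟩
    have := (tendsto_one_div_add_atTop_nhds_zero_nat (𝕜 := ℝ)).const_mul (Real.pi / 2)
    simpa [δ, div_eq_mul_inv] using this
  let w : ℕ → E × E → ℝ := fun n p =>
    (δ n)⁻¹ * (h (Real.cos (δ n) • p.1 + Real.sin (δ n) • p.2) - h p.1)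
  have hcont := hh.continuous
  have hw_meas (n : ℕ) : AEStronglyMeasurable (w n) (μ.prod μ) :=
    Continuous.aestronglyMeasurable (by fun_prop)
  have hw_lim : ∀ᵐ p ∂(μ.prod μ), Tendsto (fun n => w n p) atTop (𝓝 (fderiv ℝ h p.1 p.2)) := by
    filter_upwards [Measure.quasiMeasurePreserving_fst.ae hd] with p hp
    have hder := HasFDerivAt.comp_hasDerivAt (l := h) (l' := fderiv ℝ h p.1) (0 : ℝ)
      (by simpa using hp.hasFDerivAt) (hasDerivAt_cos_smul_add_sin_smul p.1 p.2)
    simpa [w, Function.comp_def] using hder.tendsto_slope_zero.comp hδ_lim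
  have hw_bound (n : ℕ) (p : E × E) : |w n p| ≤ K * (‖p.1‖ + ‖p.2‖) := by
    rw [abs_mul, abs_inv, abs_of_pos (hδ_pos n), inv_mul_le_iff₀ (hδ_pos n)]
    simpa [abs_of_pos (hδ_pos n)] using
      hh.abs_cos_smul_add_sin_smul_sub_le (δ n) p.1 p.2
  have hbound : Integrable (fun p : E × E => (K * (‖p.1‖ + ‖p.2‖)) ^ 2) (μ.prod μ) := by
    have hn : MemLp (fun x : E => ‖x‖) 2 μ := (IsGaussian.memLp_two_id (μ := μ)).norm
    exact (((hn.comp_fst μ).add (hn.comp_snd μ)).const_mul (K : ℝ)).integrable_sq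
  have hlim := tendsto_integral_of_dominated_convergence (μ := μ.prod μ)
    (F := fun n p => w n p ^ 2) (f := fun p => (fderiv ℝ h p.1 p.2) ^ 2) _
    (fun n => (hw_meas n).pow 2) hbound
    (fun n => .of_forall fun p => by
      rw [Real.norm_eq_abs, abs_pow]
      exact pow_le_pow_left₀ (abs_nonneg _) (hw_bound n p) 2)
    (hw_lim.mono fun p hp => hp.pow 2)
  have hD_int : Integrable (fun p : E × E => (fderiv ℝ h p.1 p.2) ^ 2) (μ.prod μ) := by
    refine hbound.mono' ((aestronglyMeasurable_of_tendsto_ae atTop hw_meas hw_lim).pow 2)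
      (.of_forall fun p => ?_)
    rw [Real.norm_eq_abs, abs_pow]
    refine pow_le_pow_left₀ (abs_nonneg _) ?_ 2
    calc |fderiv ℝ h p.1 p.2| ≤ ‖fderiv ℝ h p.1‖ * ‖p.2‖ := (fderiv ℝ h p.1).le_opNorm _
      _ ≤ K * ‖p.2‖ := by gcongr; exact norm_fderiv_le_of_lipschitz ℝ hh
      _ ≤ K * (‖p.1‖ + ‖p.2‖) := by gcongr; linarith [norm_nonneg p.1]
  have hD_le : ∫ p, (fderiv ℝ h p.1 p.2) ^ 2 ∂(μ.prod μ) ≤ C := by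
    rw [integral_prod _ hD_int]
    calc ∫ x, ∫ y, (fderiv ℝ h x y) ^ 2 ∂μ ∂μ ≤ ∫ _, C ∂μ := by
          refine integral_mono_ae hD_int.integral_prod_left (integrable_const _) ?_
          filter_upwards [hC] with x hx
          have hmean : μ[fderiv ℝ h x] = 0 := by
            rw [IsGaussian.integral_dual]
            simp only [id_eq] at hμ
            simp [hμ]
          rwa [variance_of_integral_eq_zero (by fun_prop) hmean] at hx
      _ = C := by simp
  have hvar (n : ℕ) : 2 * Var[h; μ] ≤ (Real.pi / 2) ^ 2 * ∫ p, w n p ^ 2 ∂(μ.prod μ) := by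
    have hn : ((n + 1 : ℕ) : ℝ) * δ n = Real.pi / 2 := by
      simp only [δ]; push_cast; field_simp
    refine (two_mul_variance_le_sq_mul_integral hμ hcont hh.memLp_two_of_isGaussian hn).trans_eq ?_
    simp only [w, mul_pow, integral_const_mul]
    rw [← hn, mul_pow, inv_pow]
    have := (hδ_pos n).ne'
    field_simp
  have := ge_of_tendsto' (hlim.const_mul ((Real.pi / 2) ^ 2)) hvar
  nlinarith [sq_nonneg Real.pi]

end Poincare

/-- Gaussian Poincaré inequality for a product of centered real Gaussian measures and a function
that is Lipschitz for the Euclidean distance. -/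
lemma variance_pi_gaussianReal_le {d : ℕ} {v : ℝ≥0} (hv : v ≠ 0) {K : ℝ≥0}
    {g : EuclideanSpace ℝ (Fin d) → ℝ} (hg : LipschitzWith K g) :
    Var[fun x => g (WithLp.toLp 2 x); Measure.pi fun _ : Fin d => gaussianReal 0 v] ≤
      Real.pi ^ 2 / 8 * (v * K ^ 2) := by
  have := isGaussian_pi_gaussianReal (ι := Fin d) v
  have hlip := hg.comp (PiLp.lipschitzWith_toLp 2 fun _ : Fin d => ℝ)
  have hac : (Measure.pi fun _ : Fin d => gaussianReal 0 v) ≪ volume :=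
    .pi_fin fun _ => gaussianReal_absolutelyContinuous 0 hv
  refine hlip.variance_le_of_isGaussian (integral_id_pi_gaussianReal v)
    (hac.ae_le hlip.ae_differentiableAt) (.of_forall fun x => ?_)
  let e := (PiLp.continuousLinearEquiv 2 ℝ fun _ : Fin d => ℝ).symm
  have hfd : fderiv ℝ (g ∘ WithLp.toLp 2) x = (fderiv ℝ g (WithLp.toLp 2 x)).comp
      (e : (Fin d → ℝ) →L[ℝ] EuclideanSpace ℝ (Fin d)) := e.comp_right_fderiv
  rw [variance_dual_pi_gaussianReal, hfd]
  gcongr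
  calc ∑ i, ((fderiv ℝ g (WithLp.toLp 2 x)).comp (e : (Fin d → ℝ) →L[ℝ] EuclideanSpace ℝ (Fin d))
        (Pi.single i 1)) ^ 2
      = ‖fderiv ℝ g (WithLp.toLp 2 x)‖ ^ 2 := by
        rw [(EuclideanSpace.basisFun (Fin d) ℝ).norm_dual]
        simp [e]
    _ ≤ (K : ℝ) ^ 2 := by
        gcongr
        exact norm_fderiv_le_of_lipschitz ℝ hg

/-- A function that is Lipschitz on `A` agrees, after truncation at level `R`, with a globally
Lipschitz function bounded by `R`. -/
lemma LipschitzOnWith.exists_truncated_extension {α : Type*} [PseudoMetricSpace α] {f : α → ℝ}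
    {A : Set α} {K : ℝ≥0} (hf : LipschitzOnWith K f A) {R : ℝ} (hR : 0 ≤ R) :
    ∃ g : α → ℝ, LipschitzWith K g ∧ (∀ x, |g x| ≤ R) ∧
      ∀ x ∈ A, g x = max (-R) (min (f x) R) := by
  obtain ⟨g, hg, hfg⟩ := hf.extend_real
  refine ⟨fun x => max (-R) (min (g x) R), (hg.min_const R).const_max (-R), fun x => ?_,
    fun x hx => by rw [hfg hx]⟩
  exact abs_le.2 ⟨le_max_left _ _, max_le (by linarith) (min_le_right _ _)⟩

lemma sq_sub_truncation_le (t : ℝ) {R : ℝ} (hR : 0 < R) :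
    (t - max (-R) (min t R)) ^ 2 ≤ t ^ 4 / (16 * R ^ 2) := by
  have key (s : ℝ) (hs : R ≤ s) : (s - R) ^ 2 ≤ s ^ 4 / (16 * R ^ 2) := by
    rw [le_div_iff₀ (by positivity)]
    have h1 : 4 * R * (s - R) ≤ s ^ 2 := by nlinarith [sq_nonneg (s - 2 * R)]
    have h2 : 0 ≤ 4 * R * (s - R) := mul_nonneg (by positivity) (by linarith)
    nlinarith [pow_le_pow_left₀ h2 h1 2]
  rcases le_total t (-R) with h | h
  · rw [min_eq_left (by linarith), max_eq_left h]
    convert key (-t) (by linarith) using 1 <;> ring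
  rcases le_total t R with h' | h'
  · rw [min_eq_left h', max_eq_right h, sub_self, zero_pow two_ne_zero]
    positivity
  · rw [min_eq_right h', max_eq_right (by linarith)]
    exact key t h'

lemma sq_sub_le_of_abs_le {t s R : ℝ} (hR : 0 < R) (hs : |s| ≤ R) :
    (t - s) ^ 2 ≤ 5 / (32 * R ^ 2) * t ^ 4 + 9 * R ^ 2 := by
  have h1 : (t - s) ^ 2 ≤ 3 / 2 * t ^ 2 + 3 * R ^ 2 := by
    have : s ^ 2 ≤ R ^ 2 := sq_le_sq' (abs_le.1 hs).1 (abs_le.1 hs).2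
    nlinarith [sq_nonneg (t + 2 * s)]
  have h2 : 3 / 2 * t ^ 2 ≤ 3 / (32 * R ^ 2) * t ^ 4 + 6 * R ^ 2 := by
    have : 3 / (32 * R ^ 2) * t ^ 4 + 6 * R ^ 2 - 3 / 2 * t ^ 2 =
        3 / (32 * R ^ 2) * (t ^ 2 - 8 * R ^ 2) ^ 2 := by field_simp; ring
    have : 0 ≤ 3 / (32 * R ^ 2) * (t ^ 2 - 8 * R ^ 2) ^ 2 := by positivity
    linarith
  have h3 : 3 / (32 * R ^ 2) * t ^ 4 ≤ 5 / (32 * R ^ 2) * t ^ 4 := by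
    gcongr; norm_num
  linarith

/-- Optimization over `r` of the bound `5 / 8 * (M / r) + 36 * (r * ε)`. -/
lemma le_add_sqrt_of_forall_pos {V B M ε : ℝ} (hM : 0 ≤ M) (hε : 0 ≤ ε)
    (h : ∀ r > 0, V ≤ B + 5 / 8 * (M / r) + 36 * (r * ε)) :
    V ≤ B + 10 * √(M * ε) := by
  rcases hM.eq_or_lt with rfl | hM'
  · simp only [zero_mul, Real.sqrt_zero, mul_zero, add_zero]
    refine le_of_forall_pos_le_add fun η hη => ?_
    refine (h (η / (36 * (ε + 1))) (by positivity)).trans ?_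
    have : 36 * (η / (36 * (ε + 1)) * ε) ≤ η := by
      rw [show 36 * (η / (36 * (ε + 1)) * ε) = η * ε / (ε + 1) by field_simp,
        div_le_iff₀ (by positivity)]
      nlinarith
    simp only [zero_div, mul_zero, add_zero]
    linarith
  rcases hε.eq_or_lt with rfl | hε'
  · simp only [mul_zero, Real.sqrt_zero, add_zero]
    refine le_of_forall_pos_le_add fun η hη => ?_
    refine (h (M / η) (by positivity)).trans ?_
    have : M / (M / η) = η := by field_simp
    rw [this]
    linarith
  · have hm := Real.sqrt_pos.2 hM'
    have he := Real.sqrt_pos.2 hε'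
    have h' := h (√M / √ε / 8) (by positivity)
    have h1 : M / (√M / √ε / 8) = 8 * (√M * √ε) := by
      nth_rewrite 1 [← Real.mul_self_sqrt hM]
      field_simp
    have h2 : √M / √ε / 8 * ε = √M * √ε / 8 := by
      nth_rewrite 2 [← Real.mul_self_sqrt hε]
      field_simp
    rw [h1, h2] at h'
    rw [Real.sqrt_mul hM]
    nlinarith [mul_pos hm he]

lemma variance_le_add_integral_sq_sub {Ω : Type*} [MeasurableSpace Ω] {μ : Measure Ω}
    [IsProbabilityMeasure μ] {f g : Ω → ℝ} (hf : MemLp f 2 μ) (hg : MemLp g 2 μ) :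
    Var[f; μ] ≤ 4 / 3 * Var[g; μ] + 4 * ∫ x, (f x - g x) ^ 2 ∂μ := by
  have hc : MemLp (fun x => g x - μ[g]) 2 μ := hg.sub (memLp_const _)
  have hfg : MemLp (fun x => f x - g x) 2 μ := hf.sub hg
  calc Var[f; μ] = Var[fun x => f x - μ[g]; μ] := (variance_sub_const hf.aestronglyMeasurable _).symm
    _ ≤ ∫ x, (f x - μ[g]) ^ 2 ∂μ :=
        variance_le_expectation_sq (hf.aestronglyMeasurable.sub aestronglyMeasurable_const)
    _ ≤ ∫ x, (4 / 3 * (g x - μ[g]) ^ 2 + 4 * (f x - g x) ^ 2) ∂μ := by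
        refine integral_mono (hf.sub (memLp_const _)).integrable_sq
          ((hc.integrable_sq.const_mul _).add (hfg.integrable_sq.const_mul _)) fun x => ?_
        change (f x - μ[g]) ^ 2 ≤ 4 / 3 * (g x - μ[g]) ^ 2 + 4 * (f x - g x) ^ 2
        nlinarith [sq_nonneg ((g x - μ[g]) - 3 * (f x - g x))]
    _ = 4 / 3 * Var[g; μ] + 4 * ∫ x, (f x - g x) ^ 2 ∂μ := by
        rw [integral_add (hc.integrable_sq.const_mul _) (hfg.integrable_sq.const_mul _),
          integral_const_mul, integral_const_mul, variance_eq_integral hg.aemeasurable]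

/-- `L²` distance between `f` and a function `g` bounded by `R` that coincides on `A` with the
truncation of `f` at level `R`. -/
lemma integral_sq_sub_le_of_eq_truncation {Ω : Type*} [MeasurableSpace Ω] {μ : Measure Ω}
    [IsProbabilityMeasure μ] {f g : Ω → ℝ} {A : Set Ω} (hA : MeasurableSet A) {R : ℝ}
    (hR : 0 < R) (hgR : ∀ x, |g x| ≤ R) (hgA : ∀ x ∈ A, g x = max (-R) (min (f x) R))
    (hf : Integrable (fun x => f x ^ 4) μ) (hfg : Integrable (fun x => (f x - g x) ^ 2) μ) :
    ∫ x, (f x - g x) ^ 2 ∂μ ≤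
      5 / (32 * R ^ 2) * ∫ x, f x ^ 4 ∂μ + 9 * R ^ 2 * μ.real Aᶜ := by
  have hind : Integrable (Aᶜ.indicator fun _ => 9 * R ^ 2) μ :=
    (integrable_const _).indicator hA.compl
  calc ∫ x, (f x - g x) ^ 2 ∂μ
      ≤ ∫ x, (5 / (32 * R ^ 2) * f x ^ 4 + Aᶜ.indicator (fun _ => 9 * R ^ 2) x) ∂μ := by
        refine integral_mono hfg ((hf.const_mul _).add hind) fun x => ?_
        change (f x - g x) ^ 2 ≤ 5 / (32 * R ^ 2) * f x ^ 4 + Aᶜ.indicator (fun _ => 9 * R ^ 2) x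
        by_cases hx : x ∈ A
        · rw [Set.indicator_of_notMem (by simpa using hx), hgA x hx, add_zero]
          refine (sq_sub_truncation_le (f x) hR).trans ?_
          rw [div_mul_eq_mul_div, div_le_div_iff₀ (by positivity) (by positivity)]
          have : 0 ≤ f x ^ 4 * R ^ 2 := by positivity
          nlinarith
        · rw [Set.indicator_of_mem (by simpa using hx)]
          exact sq_sub_le_of_abs_le hR (hgR x)
    _ = _ := by
        rw [integral_add (hf.const_mul _) hind, integral_const_mul,
          integral_indicator_const _ hA.compl, smul_eq_mul, mul_comm (μ.real Aᶜ)]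

/-- variance bound for a function that is Lipschitz on a set of
high Gaussian measure. If `G ~ N(0, σ²I_d)`, `f` is measurable, `f|_A` is
`L`-Lipschitz (Euclidean metric) with `P(G ∈ A) ≥ 1 - ε`, and `M = E f(G)⁴`,
then `Var f(G) ≤ 2σ²L² + 10√(Mε)`. -/
theorem variance_lipschitz_on_high_prob_set (d : ℕ) (σ : NNReal)
    (μ : Measure (Fin d → ℝ)) (hμ : μ = Measure.pi fun _ : Fin d => gaussianReal 0 (σ ^ 2))
    (f : (Fin d → ℝ) → ℝ) (hf : Measurable f)
    (L ε M : ℝ) (hL : 0 ≤ L) (hε : 0 ≤ ε)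
    (A : Set (Fin d → ℝ)) (hA : MeasurableSet A)
    (hAprob : 1 - ε ≤ (μ A).toReal)
    (hLip : ∀ x ∈ A, ∀ y ∈ A,
      |f x - f y| ≤ L * Real.sqrt (∑ i, (x i - y i) ^ 2))
    (hM : M = ∫ x, (f x) ^ 4 ∂μ)
    (hMint : Integrable (fun x => (f x) ^ 4) μ) :
    ∫ x, (f x - ∫ y, f y ∂μ) ^ 2 ∂μ
      ≤ 2 * (σ : ℝ) ^ 2 * L ^ 2 + 10 * Real.sqrt (M * ε) := by
  have hgauss : IsGaussian μ := hμ ▸ isGaussian_pi_gaussianReal (σ ^ 2)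
  have hM0 : 0 ≤ M := hM ▸ integral_nonneg fun x => by positivity
  rcases eq_or_ne σ 0 with rfl | hσ
  · have hdirac := IsGaussian.eq_dirac_of_variance_eq_zero (μ := μ) fun D => by
      rw [hμ, variance_dual_pi_gaussianReal]
      simp
    rw [hdirac]
    rw [integral_dirac, integral_dirac, sub_self, zero_pow two_ne_zero]
    positivity
  have hfL2 : MemLp f 2 μ := by
    rw [memLp_two_iff_integrable_sq hf.aestronglyMeasurable]
    refine (hMint.add (integrable_const (1 : ℝ))).mono' (by fun_prop) (.of_forall fun x => ?_)
    rw [Real.norm_of_nonneg (sq_nonneg _)]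
    change f x ^ 2 ≤ f x ^ 4 + 1
    nlinarith [sq_nonneg (f x ^ 2 - 1)]
  have hAc : μ.real Aᶜ ≤ ε := by
    rw [probReal_compl_eq_one_sub hA]
    change 1 - (μ A).toReal ≤ ε
    linarith
  have hLipE : LipschitzOnWith L.toNNReal
      (fun x : EuclideanSpace ℝ (Fin d) => f x.ofLp) (WithLp.ofLp ⁻¹' A) := by
    refine LipschitzOnWith.of_dist_le_mul fun x hx y hy => ?_
    rw [Real.dist_eq, Real.coe_toNNReal L hL, EuclideanSpace.dist_eq]
    simpa [Real.dist_eq] using hLip _ hx _ hy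
  rw [← variance_eq_integral hf.aemeasurable]
  refine le_add_sqrt_of_forall_pos hM0 hε fun r hr => ?_
  obtain ⟨h, hhLip, hhR, hhA⟩ := hLipE.exists_truncated_extension (Real.sqrt_nonneg r)
  let g : (Fin d → ℝ) → ℝ := fun x => h (WithLp.toLp 2 x)
  have hgL2 : MemLp g 2 μ :=
    (hhLip.comp (PiLp.lipschitzWith_toLp 2 fun _ : Fin d => ℝ)).memLp_two_of_isGaussian
  have hgVar : Var[g; μ] ≤ Real.pi ^ 2 / 8 * ((σ : ℝ) ^ 2 * L ^ 2) := by
    simpa [hμ, Real.coe_toNNReal L hL] using variance_pi_gaussianReal_le (pow_ne_zero 2 hσ) hhLip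
  have hdist := integral_sq_sub_le_of_eq_truncation hA (Real.sqrt_pos.2 hr) (fun x => hhR _)
    (fun x hx => hhA (WithLp.toLp 2 x) hx) hMint (hfL2.sub hgL2).integrable_sq
  rw [Real.sq_sqrt hr.le, ← hM] at hdist
  have hpi : 4 / 3 * (Real.pi ^ 2 / 8 * ((σ : ℝ) ^ 2 * L ^ 2)) ≤ 2 * (σ : ℝ) ^ 2 * L ^ 2 := by
    have hpi2 : Real.pi ^ 2 ≤ 12 := by nlinarith [Real.pi_pos, Real.pi_lt_d2]
    nlinarith [mul_le_mul_of_nonneg_right hpi2 (by positivity : 0 ≤ (σ : ℝ) ^ 2 * L ^ 2)]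
  calc Var[f; μ] ≤ 4 / 3 * Var[g; μ] + 4 * ∫ x, (f x - g x) ^ 2 ∂μ :=
        variance_le_add_integral_sq_sub hfL2 hgL2
    _ ≤ 4 / 3 * (Real.pi ^ 2 / 8 * ((σ : ℝ) ^ 2 * L ^ 2)) +
          4 * (5 / (32 * r) * M + 9 * r * ε) := by
        gcongr
        exact hdist.trans (by gcongr)
    _ ≤ 2 * (σ : ℝ) ^ 2 * L ^ 2 + 4 * (5 / (32 * r) * M + 9 * r * ε) := by gcongr
    _ = 2 * (σ : ℝ) ^ 2 * L ^ 2 + 5 / 8 * (M / r) + 36 * (r * ε) := by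
        field_simp
        ring
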